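/- Let n ≥ 1 and let M be a model of PA⁻ + IΣn in which GPHP(Σ_{n+1}) fails. Then the set I = {a ∈ M : there exists b ∈ M such that every Σ_{n+1}-definable map from [0,b) into [0,a) fails to be injective} is a proper cut of M (downward closed, closed under successor, and not all of M) that is closed under addition; moreover, if a ∈ I and b > I then there is no Σ_{n+1}-definable injection from [0,b) into [0,a). -/

import Mathlib

/- Shared development: first-order arithmetic in the language {0,1,+,·,<},
   the arithmetic hierarchy, fragments of arithmetic, and coded finite
   combinatorics inside models. -/

open FirstOrder Language

namespace ArithFC

/-- Function symbols of the language of arithmetic: 0, 1, +, ·. -/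
inductive Func : ℕ → Type
  | zero : Func 0
  | one : Func 0
  | add : Func 2
  | mul : Func 2

/-- Relation symbols of the language of arithmetic: <. -/
inductive Rel : ℕ → Type
  | lt : Rel 2

/-- The first-order language {0, 1, +, ·, <}. -/
def lang : Language :=
  { Functions := Func, Relations := Rel }

section Instances

variable (M : Type) [lang.Structure M]

instance : Zero M := ⟨Structure.funMap (L := lang) Func.zero ![]⟩
instance : One M := ⟨Structure.funMap (L := lang) Func.one ![]⟩
instance : Add M := ⟨fun x y => Structure.funMap (L := lang) Func.add ![x, y]⟩
instance : Mul M := ⟨fun x y => Structure.funMap (L := lang) Func.mul ![x, y]⟩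
instance : LT M := ⟨fun x y => Structure.RelMap (L := lang) Rel.lt ![x, y]⟩
instance : LE M := ⟨fun x y => x < y ∨ x = y⟩

end Instances

/-- The numeral `n` in a model. -/
def numM (M : Type) [lang.Structure M] : ℕ → M
  | 0 => 0
  | n + 1 => numM M n + 1

/-- `b` is nonstandard (greater than every numeral). -/
def Nonstd {M : Type} [lang.Structure M] (b : M) : Prop := ∀ n : ℕ, numM M n < b

/-- The atomic formula `t < u`. -/
def ltFm {α : Type} {n : ℕ} (t u : lang.Term (α ⊕ Fin n)) : lang.BoundedFormula α n :=
  BoundedFormula.rel (Rel.lt : lang.Relations 2) ![t, u]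

/-- Δ₀ formulas: built from atomic formulas by boolean connectives and
bounded universal quantification (this generates, up to logical equivalence,
the usual class of bounded formulas). -/
inductive IsDelta0 {α : Type} : ∀ n : ℕ, lang.BoundedFormula α n → Prop
  | falsum (n : ℕ) : IsDelta0 n BoundedFormula.falsum
  | equal (n : ℕ) (t u : lang.Term (α ⊕ Fin n)) : IsDelta0 n (BoundedFormula.equal t u)
  | rel (n l : ℕ) (R : lang.Relations l) (ts : Fin l → lang.Term (α ⊕ Fin n)) :
      IsDelta0 n (BoundedFormula.rel R ts)
  | imp (n : ℕ) {φ ψ : lang.BoundedFormula α n} :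
      IsDelta0 n φ → IsDelta0 n ψ → IsDelta0 n (φ.imp ψ)
  | bdAll (n : ℕ) (t : lang.Term (α ⊕ Fin n)) {φ : lang.BoundedFormula α (n + 1)} :
      IsDelta0 (n + 1) φ →
      IsDelta0 n
        (BoundedFormula.all ((ltFm (Term.var (Sum.inr (Fin.last n))) (t.liftAt 1 n)).imp φ))

mutual
  /-- Σ_m formulas. -/
  inductive SigmaFm {α : Type} : ℕ → ∀ n : ℕ, lang.BoundedFormula α n → Prop
    | delta0 (m n : ℕ) {φ : lang.BoundedFormula α n} : IsDelta0 n φ → SigmaFm m n φ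
    | ofPi (m n : ℕ) {φ : lang.BoundedFormula α n} : PiFm m n φ → SigmaFm (m + 1) n φ
    | ex (m n : ℕ) {φ : lang.BoundedFormula α (n + 1)} :
        SigmaFm (m + 1) (n + 1) φ → SigmaFm (m + 1) n φ.ex
  /-- Π_m formulas. -/
  inductive PiFm {α : Type} : ℕ → ∀ n : ℕ, lang.BoundedFormula α n → Prop
    | delta0 (m n : ℕ) {φ : lang.BoundedFormula α n} : IsDelta0 n φ → PiFm m n φ
    | ofSigma (m n : ℕ) {φ : lang.BoundedFormula α n} : SigmaFm m n φ → PiFm (m + 1) n φ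
    | all (m n : ℕ) {φ : lang.BoundedFormula α (n + 1)} :
        PiFm (m + 1) (n + 1) φ → PiFm (m + 1) n φ.all
end

/-- A `k`-ary relation on `M` is Σ_m-definable (with parameters from `M`). -/
def IsSigmaDef (m : ℕ) (M : Type) [lang.Structure M] {k : ℕ} (R : (Fin k → M) → Prop) : Prop :=
  ∃ (p : ℕ) (φ : lang.BoundedFormula (Fin k ⊕ Fin p) 0) (w : Fin p → M),
    SigmaFm m 0 φ ∧ ∀ v : Fin k → M, R v ↔ φ.Realize (Sum.elim v w) finZeroElim

/-- A subset of `M` is Σ_m-definable with parameters. -/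
def SigmaDef1 (m : ℕ) (M : Type) [lang.Structure M] (A : Set M) : Prop :=
  IsSigmaDef m M (k := 1) fun v => v 0 ∈ A

/-- A binary relation on `M` is Σ_m-definable with parameters. -/
def SigmaDef2 (m : ℕ) (M : Type) [lang.Structure M] (R : M → M → Prop) : Prop :=
  IsSigmaDef m M (k := 2) fun v => R (v 0) (v 1)

/-- A ternary relation on `M` is Σ_m-definable with parameters. -/
def SigmaDef3 (m : ℕ) (M : Type) [lang.Structure M] (R : M → M → M → Prop) : Prop :=
  IsSigmaDef m M (k := 3) fun v => R (v 0) (v 1) (v 2)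

/-- `M` is a model of PA⁻ (the nonnegative part of a discretely ordered
commutative semiring). -/
structure PAm (M : Type) [lang.Structure M] : Prop where
  add_assoc : ∀ x y z : M, x + y + z = x + (y + z)
  add_comm : ∀ x y : M, x + y = y + x
  mul_assoc : ∀ x y z : M, x * y * z = x * (y * z)
  mul_comm : ∀ x y : M, x * y = y * x
  ldistrib : ∀ x y z : M, x * (y + z) = x * y + x * z
  add_zero : ∀ x : M, x + 0 = x
  mul_zero : ∀ x : M, x * 0 = 0
  mul_one : ∀ x : M, x * 1 = x
  lt_trans : ∀ x y z : M, x < y → y < z → x < z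
  lt_irrefl : ∀ x : M, ¬x < x
  lt_total : ∀ x y : M, x < y ∨ x = y ∨ y < x
  add_lt_add : ∀ x y z : M, x < y → x + z < y + z
  mul_lt_mul : ∀ x y z : M, x < y → 0 < z → x * z < y * z
  sub_exists : ∀ x y : M, x < y → ∃ z, x + z = y
  zero_lt_one : (0 : M) < 1
  discrete : ∀ x : M, 0 < x → (1 : M) ≤ x
  zero_le : ∀ x : M, (0 : M) ≤ x

/-- `M` satisfies the Σ_m-induction scheme (with parameters). -/
def ISig (m : ℕ) (M : Type) [lang.Structure M] : Prop :=
  ∀ A : Set M, SigmaDef1 m M A → (0 : M) ∈ A → (∀ x, x ∈ A → x + 1 ∈ A) → ∀ x, x ∈ A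

/-- `M` satisfies the Σ_m-collection (bounding) scheme (with parameters). -/
def BSig (m : ℕ) (M : Type) [lang.Structure M] : Prop :=
  ∀ R : M → M → Prop, SigmaDef2 m M R → ∀ a : M,
    (∀ x, x < a → ∃ y, R x y) → ∃ b, ∀ x, x < a → ∃ y, y < b ∧ R x y

section Coding

variable {M : Type} [lang.Structure M]

/-- `z` is the Cantor pair `⟨x, y⟩`: `2z = (x+y)(x+y+1) + 2y`. -/
def IsPairC (z x y : M) : Prop := z + z = (x + y) * (x + y + 1) + (y + y)

/-- Gödel's β-function: `x = a mod ((i+1)·b + 1)`. -/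
def BetaC (a b i x : M) : Prop :=
  x < (i + 1) * b + 1 ∧ ∃ q, a = q * ((i + 1) * b + 1) + x

/-- The sequence coded by `s` (via a Cantor pair of β-function data) has value `x`
at place `i`. -/
def SeqAt (s i x : M) : Prop := ∃ a b, IsPairC s a b ∧ BetaC a b i x

/-- `c` codes the M-finite set `X` of cardinality `card`: `c = ⟨card, s⟩` where `s`
codes the strictly increasing enumeration of `X` of length `card`. -/
def CodesFinset (c : M) (X : Set M) (card : M) : Prop :=
  ∃ s, IsPairC c card s ∧
    (∀ i, i < card → ∃ x, x ∈ X ∧ SeqAt s i x) ∧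
    (∀ i j x y, i < j → j < card → SeqAt s i x → SeqAt s j y → x < y) ∧
    (∀ x, x ∈ X ↔ ∃ i, i < card ∧ SeqAt s i x)

/-- `X` is an M-finite (coded) set. -/
def MFinite (X : Set M) : Prop := ∃ c card : M, CodesFinset c X card

/-- `d` codes an `e`-element subset `D` of `[0, y)`, i.e. an element of `[y]^e`. -/
def CodesTupleIn (d e y : M) (D : Set M) : Prop :=
  CodesFinset d D e ∧ ∀ z ∈ D, z < y

/-- `f` codes a (finite) function defined on all of `[0, a)`. -/
def CodesFunOn (f a : M) : Prop :=
  ∀ x, x < a → (∃ y, SeqAt f x y) ∧ ∀ y y', SeqAt f x y → SeqAt f x y' → y = y'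

/-- `X` is an M-coded subset of `[0, a)`. -/
def MCodedSubset (a : M) (X : Set M) : Prop :=
  MFinite X ∧ ∀ x ∈ X, x < a

end Coding

/-- An `M`-ultrafilter on `a`: an ultrafilter of the Boolean algebra of
M-finite subsets of `[0, a)`. -/
structure MUltra (M : Type) [lang.Structure M] (a : M) where
  sets : Set (Set M)
  mem_coded : ∀ X ∈ sets, MCodedSubset a X
  univ_mem : {x : M | x < a} ∈ sets
  superset_mem : ∀ X Y : Set M, X ∈ sets → MCodedSubset a Y → X ⊆ Y → Y ∈ sets
  inter_mem : ∀ X Y : Set M, X ∈ sets → Y ∈ sets → X ∩ Y ∈ sets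
  empty_not_mem : (∅ : Set M) ∉ sets
  ultra : ∀ X : Set M, MCodedSubset a X → X ∈ sets ∨ {x : M | x < a ∧ x ∉ X} ∈ sets

section Principles

variable (M : Type) [lang.Structure M]

/-- `F` is (the graph of) a Σ_m-definable injection from `[0, y)` into `[0, x)`. -/
def SigmaInjRel (m : ℕ) (F : M → M → Prop) (y x : M) : Prop :=
  SigmaDef2 m M F ∧
    (∀ u, u < y → ∃ v, v < x ∧ F u v) ∧
    (∀ u v v', u < y → F u v → F u v' → v = v') ∧
    (∀ u u' v, u < y → u' < y → F u v → F u' v → u = u')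

/-- There exists a Σ_m-definable injection from `[0, y)` into `[0, x)`. -/
def ExSigmaInj (m : ℕ) (y x : M) : Prop := ∃ F : M → M → Prop, SigmaInjRel M m F y x

/-- There exists a Σ_m-definable injection from all of `M` into `[0, a)`. -/
def SigmaInjWhole (m : ℕ) (a : M) : Prop :=
  ∃ F : M → M → Prop, SigmaDef2 m M F ∧
    (∀ u, ∃ v, v < a ∧ F u v) ∧
    (∀ u v v', F u v → F u v' → v = v') ∧
    (∀ u u' v, F u v → F u' v → u = u')

/-- CARD(Σ_m): no Σ_m-definable multivalued map sends `M` injectively below `a`. -/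
def CARD (m : ℕ) : Prop :=
  ∀ F : M → M → Prop, SigmaDef2 m M F → ∀ a : M,
    (∀ x, ∃ y, y < a ∧ F x y) →
      ∃ x0 x1 y, x0 ≠ x1 ∧ y < a ∧ F x0 y ∧ F x1 y

/-- GPHP(Σ_m): for every `x` there is `y` with no Σ_m-definable injection of
`[0,y)` into `[0,x)`. -/
def GPHP (m : ℕ) : Prop := ∀ x : M, ∃ y : M, ¬ExSigmaInj M m y x

/-- WPHP(Σ_m): for `x > 0` there is no Σ_m-definable injection of `[0,2x)` into `[0,x)`. -/
def WPHP (m : ℕ) : Prop := ∀ x : M, 0 < x → ¬ExSigmaInj M m (x + x) x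

/-- `C` is a Σ_m-definable `k`-coloring of `[y]^e` (acting on codes of
`e`-element subsets of `[0,y)`, independently of the chosen code). -/
def IsColoring (m : ℕ) (e y k : M) (C : M → M → Prop) : Prop :=
  SigmaDef2 m M C ∧
    (∀ d D, CodesTupleIn d e y D → ∃ i, i < k ∧ C d i) ∧
    (∀ d d' D i i', CodesTupleIn d e y D → CodesTupleIn d' e y D → C d i → C d' i' → i = i')

/-- FRT^e_k(Σ_m): every Σ_m-definable `k`-coloring of some `[y]^e` has an
M-finite homogeneous set of cardinality `x`, for every `x`. -/
def FRT (m : ℕ) (e k : M) : Prop :=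
  ∀ x : M, ∃ y : M, ∀ C : M → M → Prop, IsColoring M m e y k C →
    ∃ (c : M) (H : Set M), CodesFinset c H x ∧ (∀ z ∈ H, z < y) ∧
      ∃ i, ∀ d D, CodesFinset d D e → D ⊆ H → C d i

/-- fairFRT^e_k(Σ_m): the homogeneous set is required to be given as the range of a
Σ_m-definable injection from `[0,x)` into `[0,y)`. -/
def FairFRT (m : ℕ) (e k : M) : Prop :=
  ∀ x : M, ∃ y : M, ∀ C : M → M → Prop, IsColoring M m e y k C →
    ∃ H : M → M → Prop, SigmaInjRel M m H x y ∧
      ∃ i, ∀ d D, CodesFinset d D e → (∀ z ∈ D, ∃ u, u < x ∧ H u z) → C d i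

/-- `C` is a Σ_m-definable `k`-coloring of `[0, y)`. -/
def IsColoring1 (m : ℕ) (y k : M) (C : M → M → Prop) : Prop :=
  SigmaDef2 m M C ∧
    (∀ z, z < y → ∃ i, i < k ∧ C z i) ∧
    (∀ z i i', z < y → C z i → C z i' → i = i')

/-- FRT¹_k(Σ_m): every Σ_m-definable `k`-coloring of some `[0,y)` has an M-finite
homogeneous set of cardinality `x`, for every `x`. -/
def FRT1 (m : ℕ) (k : M) : Prop :=
  ∀ x : M, ∃ y : M, ∀ C : M → M → Prop, IsColoring1 M m y k C →
    ∃ (c : M) (H : Set M), CodesFinset c H x ∧ (∀ z ∈ H, z < y) ∧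
      ∃ i, ∀ z ∈ H, C z i

/-- fairFRT¹_k(Σ_m). -/
def FairFRT1 (m : ℕ) (k : M) : Prop :=
  ∀ x : M, ∃ y : M, ∀ C : M → M → Prop, IsColoring1 M m y k C →
    ∃ H : M → M → Prop, SigmaInjRel M m H x y ∧
      ∃ i, ∀ u v, u < x → H u v → C v i

end Principles

section Approx

variable {M : Type} [lang.Structure M]

/-- `f` is (the graph of) a partial function. -/
def IsPartialFun (f : M → M → Prop) : Prop := ∀ x y y', f x y → f x y' → y = y'

/-- `s` codes an approximation to the partial function `f` of length `b`. -/
def IsApprox (f : M → M → Prop) (s b : M) : Prop :=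
  (∀ i, i < b → ∃ v, SeqAt s i v) ∧
    (∀ i u v x y, i + 1 < b → SeqAt s i u → SeqAt s (i + 1) v → x ≤ u → f x y → y ≤ v)

/-- `s` codes a `g`-stretched approximation to the partial function `f` of length `b`. -/
def IsStretchedApprox (f g : M → M → Prop) (s b : M) : Prop :=
  (∀ i, i < b → ∃ v, SeqAt s i v) ∧
    (∀ i u w v x y, i + 1 < b → SeqAt s i u → g u w → SeqAt s (i + 1) v →
      x ≤ w → f x y → y ≤ v)

/-- The eventual (limit) value of `fun s => h s ·` is `x`. -/
def EvLim (h : M → M → Prop) (x : M) : Prop := ∃ s : M, ∀ t, s < t → h t x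

end Approx

/-- PΣ_m: every partial Σ_m-definable function admits approximations of every length. -/
def PSig (m : ℕ) (M : Type) [lang.Structure M] : Prop :=
  ∀ f : M → M → Prop, SigmaDef2 m M f → IsPartialFun f → ∀ b : M, ∃ s, IsApprox f s b

section Extensions

variable (M N : Type) [lang.Structure M] [lang.Structure N]

/-- `g : M → N` is Σ_m-elementary: Σ_m formulas with parameters from `M` transfer. -/
def SigmaElem (m : ℕ) (g : M → N) : Prop :=
  ∀ (p : ℕ) (φ : lang.BoundedFormula (Fin p) 0), SigmaFm m 0 φ →
    ∀ v : Fin p → M, (φ.Realize v finZeroElim ↔ φ.Realize (g ∘ v) finZeroElim)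

/-- The extension `g : M → N` is cofinal. -/
def Cofinal (g : M → N) : Prop := ∀ z : N, ∃ x : M, z ≤ g x

/-- `[0,a]^M = [0,a]^N`: every element of `N` below `g a` comes from `M`. -/
def SameBelow (g : M → N) (a : M) : Prop := ∀ z : N, z ≤ g a → ∃ x : M, g x = z

end Extensions

section Ramsey

variable {M : Type} [lang.Structure M]

/-- `f` is an M-coded `k`-coloring of `[y]^e` (assigning colors to codes of
`e`-subsets of `[0,y)`, independently of the code). -/
def CodedColoring (f e y k : M) : Prop :=
  (∀ d D, CodesTupleIn d e y D → ∃ i, i < k ∧ SeqAt f d i) ∧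
    (∀ d d' D i i', CodesTupleIn d e y D → CodesTupleIn d' e y D →
      SeqAt f d i → SeqAt f d' i' → i = i')

/-- The coded coloring `f` of `[y]^e` has an M-coded homogeneous set of cardinality `x`. -/
def CodedHomog (f e y x : M) : Prop :=
  ∃ (c : M) (H : Set M), CodesFinset c H x ∧ (∀ z ∈ H, z < y) ∧
    ∃ i, ∀ d D, CodesFinset d D e → D ⊆ H → SeqAt f d i

/-- `y = r(x, e, k)`: `y` is the least size guaranteeing coded homogeneous sets of
cardinality `x` for all coded `k`-colorings of `e`-subsets. -/
def IsRamsey (x e k y : M) : Prop :=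
  (∀ f, CodedColoring f e y k → CodedHomog f e y x) ∧
    (∀ y', y' < y → ∃ f, CodedColoring f e y' k ∧ ¬CodedHomog f e y' x)

/-- `y = r^(b)(x, e, k)`: the `b`-th iterate of the Ramsey function inside `M`. -/
def IterRamsey (x e k b y : M) : Prop :=
  ∃ s : M, SeqAt s 0 x ∧ SeqAt s b y ∧ (∀ i, i ≤ b → ∃ u, SeqAt s i u) ∧
    (∀ i u v, i < b → SeqAt s i u → SeqAt s (i + 1) v → IsRamsey u e k v)

end Ramsey

end ArithFC

namespace ArithFC

/-! The injections can be taken multivalued: in a model of IΣ_n every Σ_{n+1} relation is made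
single-valued on its domain without leaving Σ_{n+1}. Such a relation has the form `∃ z, ¬Q z x v`
with `Q` in Σ_n. By collection Σ_n is closed under bounded quantification, hence Σ_{n+1} under
conjunction and `∃`, and negations of Σ_n relations obey the least number principle. So one can
choose the least bound under which `x` has a value together with a witness, and then the least
value with a witness under that bound.

Suppose that `[0, c)` does not inject into `[0, a)`, nor `[0, c')` into `[0, a')`. Given an
injection of `[0, c * c')` into `[0, a + a')`, cut its domain into `c'` blocks of length `c`. No
block maps into `[0, a)`, so the `i`-th block has some value `a + v` with `v < a'`, and `i ↦ v` is
a multivalued injection of `[0, c')` into `[0, a')`: a contradiction. Hence `I` is closed under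
addition. An element `b` above `I` is outside `I`, so every `[0, c)` injects into `[0, b)`; were
there an injection of `[0, b)` into `[0, a)` with `a ∈ I`, composition would make every `[0, c)`
inject into `[0, a)`. -/

section Arithmetic

variable {M : Type} [lang.Structure M] [Fact (PAm M)]

theorem PAm.out : PAm M := Fact.out

instance instCommSemiring : CommSemiring M where
  __ := (inferInstance : Zero M)
  __ := (inferInstance : One M)
  __ := (inferInstance : Add M)
  __ := (inferInstance : Mul M)
  add_assoc := PAm.out.add_assoc
  add_comm := PAm.out.add_comm
  zero_add x := by rw [PAm.out.add_comm, PAm.out.add_zero]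
  add_zero := PAm.out.add_zero
  mul_assoc := PAm.out.mul_assoc
  mul_comm := PAm.out.mul_comm
  one_mul x := by rw [PAm.out.mul_comm, PAm.out.mul_one]
  mul_one := PAm.out.mul_one
  zero_mul x := by rw [PAm.out.mul_comm, PAm.out.mul_zero]
  mul_zero := PAm.out.mul_zero
  left_distrib := PAm.out.ldistrib
  right_distrib x y z := by
    rw [PAm.out.mul_comm, PAm.out.ldistrib, PAm.out.mul_comm z, PAm.out.mul_comm z]
  nsmul := nsmulRec
  npow := npowRec

noncomputable instance instLinearOrder : LinearOrder M where
  __ := (inferInstance : LT M)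
  __ := (inferInstance : LE M)
  le_refl _ := .inr rfl
  le_trans := by
    rintro x y z (hxy | rfl) (hyz | rfl)
    exacts [.inl (PAm.out.lt_trans _ _ _ hxy hyz), .inl hxy, .inl hyz, .inr rfl]
  lt_iff_le_not_ge x y := by
    refine ⟨fun h => ⟨.inl h, ?_⟩, fun ⟨hle, hge⟩ => hle.resolve_right fun h => hge (.inr h.symm)⟩
    rintro (h' | rfl)
    exacts [PAm.out.lt_irrefl _ (PAm.out.lt_trans _ _ _ h h'), PAm.out.lt_irrefl _ h]
  le_antisymm := by
    rintro x y (hxy | rfl) (hyx | hyx)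
    exacts [(PAm.out.lt_irrefl _ (PAm.out.lt_trans _ _ _ hxy hyx)).elim, hyx.symm, rfl, rfl]
  le_total x y := by
    rcases PAm.out.lt_total x y with h | h | h
    exacts [.inl (.inl h), .inl (.inr h), .inr (.inl h)]
  toDecidableLE := Classical.decRel _

instance instCanonicallyOrderedAdd : CanonicallyOrderedAdd M :=
  haveI le_self_add : ∀ x y : M, x ≤ x + y := fun x y => by
    rcases PAm.out.zero_le y with h | rfl
    · exact .inl (by simpa only [zero_add, add_comm y] using PAm.out.add_lt_add 0 y x h)
    · rw [add_zero]
  { le_self_add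
    le_add_self := fun x y => add_comm x y ▸ le_self_add x y
    exists_add_of_le := by
      rintro x y (h | rfl)
      exacts [(PAm.out.sub_exists x y h).imp fun _ => Eq.symm, ⟨0, (add_zero _).symm⟩] }

instance instIsStrictOrderedRing : IsStrictOrderedRing M :=
  haveI : IsOrderedCancelAddMonoid M := .of_add_lt_add_left fun z x y h => by
    simpa only [add_comm z] using PAm.out.add_lt_add x y z h
  { zero_le_one := .inl PAm.out.zero_lt_one
    exists_pair_ne := ⟨0, 1, ne_of_lt PAm.out.zero_lt_one⟩
    mul_lt_mul_of_pos_left := fun z hz x y h => by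
      simpa only [mul_comm z] using PAm.out.mul_lt_mul x y z h hz
    mul_lt_mul_of_pos_right := fun z hz x y h => PAm.out.mul_lt_mul x y z h hz }

noncomputable instance instSuccAddOrder : SuccAddOrder M where
  __ := SuccOrder.ofSuccLeIff (fun x : M => x + 1) fun {x y} => by
    refine ⟨fun h => (lt_add_one x).trans_le h, fun h => ?_⟩
    obtain ⟨z, rfl⟩ := exists_add_of_le h.le
    exact add_le_add_right (PAm.out.discrete z (pos_of_lt_add_right h)) x
  succ_eq_add_one _ := rfl

end Arithmetic

section Blocks

variable {R : Type*} [CommSemiring R] [LinearOrder R] [IsStrictOrderedRing R]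
  [CanonicallyOrderedAdd R] [SuccAddOrder R]

theorem mul_add_lt_mul {c i i' j : R} (hi : i < i') (hj : j < c) : c * i + j < c * i' :=
  calc c * i + j < c * i + c := by gcongr
    _ = c * (i + 1) := by ring
    _ ≤ c * i' := mul_le_mul_right (Order.add_one_le_iff.2 hi) c

theorem eq_of_mul_add_eq_mul_add {c i i' j j' : R} (hj : j < c) (hj' : j' < c)
    (h : c * i + j = c * i' + j') : i = i' := by
  refine le_antisymm (not_lt.1 fun hlt => ?_) (not_lt.1 fun hlt => ?_)
  · exact ((mul_add_lt_mul hlt hj').trans_le le_self_add).ne' h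
  · exact ((mul_add_lt_mul hlt hj).trans_le le_self_add).ne h

end Blocks

section TermFunctions

open scoped Stream'

variable {M : Type} [lang.Structure M] {f g : Stream' M → M} {σ τ : Stream' M → Stream' M}

/-- The functions of an environment given by terms of arithmetic. The environment `e : Stream' M`
supplies the values of variables indexed by `ℕ`, and every element of `M` may occur as a parameter,
namely as a variable that is always assigned to itself. -/
def IsTermFun (f : Stream' M → M) : Prop :=
  ∃ t : lang.Term (M ⊕ ℕ), ∀ e, f e = t.realize (Sum.elim id e.get)

/-- The maps between environments whose components are given by terms. -/
def IsTermMap (σ : Stream' M → Stream' M) : Prop := ∀ i, IsTermFun fun e => (σ e).get i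

theorem isTermFun_get (i : ℕ) : IsTermFun fun e : Stream' M => e.get i :=
  ⟨.var (.inr i), fun _ => rfl⟩

theorem isTermFun_const (c : M) : IsTermFun fun _ : Stream' M => c :=
  ⟨.var (.inl c), fun _ => rfl⟩

theorem isTermFun_realize {α : Type*} (t : lang.Term α) {v : Stream' M → α → M}
    (hv : ∀ a, IsTermFun fun e => v e a) : IsTermFun fun e => t.realize (v e) := by
  choose s hs using hv
  refine ⟨t.subst s, fun e => ?_⟩
  rw [Term.realize_subst]
  exact congrArg t.realize (funext fun a => hs a e)

theorem IsTermFun.comp (hf : IsTermFun f) (hσ : IsTermMap σ) : IsTermFun fun e => f (σ e) := by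
  obtain ⟨t, ht⟩ := hf
  simp only [ht]
  exact isTermFun_realize t (Sum.rec isTermFun_const hσ)

theorem isTermFun_funMap {k : ℕ} (F : lang.Functions k) {v : Stream' M → Fin k → M}
    (hv : ∀ i, IsTermFun fun e => v e i) : IsTermFun fun e => Structure.funMap F (v e) :=
  isTermFun_realize (.func F .var) hv

theorem IsTermFun.add (hf : IsTermFun f) (hg : IsTermFun g) : IsTermFun fun e => f e + g e :=
  isTermFun_funMap (Func.add : lang.Functions 2) (v := fun e => ![f e, g e])
    (Fin.forall_fin_two.2 ⟨hf, hg⟩)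

theorem IsTermFun.mul (hf : IsTermFun f) (hg : IsTermFun g) : IsTermFun fun e => f e * g e :=
  isTermFun_funMap (Func.mul : lang.Functions 2) (v := fun e => ![f e, g e])
    (Fin.forall_fin_two.2 ⟨hf, hg⟩)

theorem isTermMap_drop (k : ℕ) : IsTermMap fun e : Stream' M => e.drop k :=
  fun i => isTermFun_get (i + k)

theorem isTermMap_tail : IsTermMap fun e : Stream' M => e.tail := isTermMap_drop 1

theorem isTermMap_const (e : Stream' M) : IsTermMap fun _ : Stream' M => e :=
  fun i => isTermFun_const (e.get i)

theorem IsTermFun.cons (hf : IsTermFun f) (hσ : IsTermMap σ) : IsTermMap fun e => f e :: σ e :=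
  Nat.rec hf fun i _ => hσ i

theorem IsTermMap.comp (hσ : IsTermMap σ) (hτ : IsTermMap τ) : IsTermMap fun e => σ (τ e) :=
  fun i => (hσ i).comp hτ

end TermFunctions

section Delta0Rel

variable {M : Type} [lang.Structure M] {R : Stream' M → Prop}

/-- The relations on environments defined by Δ₀ formulas with parameters. Here and in `SigmaRel` a
relation `A x e` of an element and an environment is read as a relation of one environment, with
head `x` and tail `e`. -/
inductive Delta0Rel : (Stream' M → Prop) → Prop
  | falsum : Delta0Rel fun _ => False
  | eq {f g : Stream' M → M} : IsTermFun f → IsTermFun g → Delta0Rel fun e => f e = g e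
  | lt {f g : Stream' M → M} : IsTermFun f → IsTermFun g → Delta0Rel fun e => f e < g e
  | imp {A B : Stream' M → Prop} : Delta0Rel A → Delta0Rel B → Delta0Rel fun e => A e → B e
  | ball {f : Stream' M → M} {A : M → Stream' M → Prop} : IsTermFun f →
      Delta0Rel (fun e => A e.head e.tail) → Delta0Rel fun e => ∀ x, x < f e → A x e

theorem Delta0Rel.not (hR : Delta0Rel R) : Delta0Rel fun e => ¬R e := hR.imp .falsum

theorem Delta0Rel.comp (hR : Delta0Rel R) {σ : Stream' M → Stream' M} (hσ : IsTermMap σ) :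
    Delta0Rel fun e => R (σ e) := by
  induction hR generalizing σ with
  | falsum => exact falsum
  | eq hf hg => exact eq (hf.comp hσ) (hg.comp hσ)
  | lt hf hg => exact lt (hf.comp hσ) (hg.comp hσ)
  | imp _ _ ihA ihB => exact imp (ihA hσ) (ihB hσ)
  | ball hf _ ih =>
    exact ball (hf.comp hσ) (ih ((isTermFun_get 0).cons (hσ.comp isTermMap_tail)))

end Delta0Rel

section SigmaRel

variable {M : Type} [lang.Structure M] {m : ℕ}

/-- The relations on environments defined by Σ_m formulas with parameters, in the normal form
`∃ y, ¬Q y e` with `Q` one level down. -/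
def SigmaRel : ℕ → (Stream' M → Prop) → Prop
  | 0, R => Delta0Rel R
  | m + 1, R => ∃ Q : M → Stream' M → Prop,
      SigmaRel m (fun e => Q e.head e.tail) ∧ ∀ e, R e ↔ ∃ y, ¬Q y e

theorem SigmaRel.congr {R S : Stream' M → Prop} (hR : SigmaRel m R) (h : ∀ e, S e ↔ R e) :
    SigmaRel m S :=
  (funext fun e => propext (h e) : S = R) ▸ hR

theorem SigmaRel.comp {R : Stream' M → Prop} (hR : SigmaRel m R) {σ : Stream' M → Stream' M}
    (hσ : IsTermMap σ) : SigmaRel m fun e => R (σ e) := by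
  induction m generalizing R σ with
  | zero => exact Delta0Rel.comp hR hσ
  | succ m ih =>
    obtain ⟨Q, hQ, hRQ⟩ := hR
    exact ⟨fun y e => Q y (σ e), ih hQ ((isTermFun_get 0).cons (hσ.comp isTermMap_tail)),
      fun e => hRQ (σ e)⟩

theorem SigmaRel.comp₁ {A : M → Stream' M → Prop} (hA : SigmaRel m fun e => A e.head e.tail)
    {f : Stream' M → M} {σ : Stream' M → Stream' M} (hf : IsTermFun f) (hσ : IsTermMap σ) :
    SigmaRel m fun e => A (f e) (σ e) :=
  hA.comp (hf.cons hσ)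

theorem SigmaRel.comp₂ {A : M → M → Stream' M → Prop}
    (hA : SigmaRel m fun e => A e.head e.tail.head e.tail.tail) {f g : Stream' M → M}
    {σ : Stream' M → Stream' M} (hf : IsTermFun f) (hg : IsTermFun g) (hσ : IsTermMap σ) :
    SigmaRel m fun e => A (f e) (g e) (σ e) :=
  hA.comp (hf.cons (hg.cons hσ))

theorem SigmaRel.compl {R : Stream' M → Prop} (hR : SigmaRel m R) :
    SigmaRel (m + 1) fun e => ¬R e :=
  ⟨fun _ e => R e, hR.comp isTermMap_tail, fun _ => exists_const M |>.symm⟩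

theorem SigmaRel.succ {R : Stream' M → Prop} (hR : SigmaRel m R) : SigmaRel (m + 1) R := by
  induction m generalizing R with
  | zero =>
    exact (SigmaRel.compl (m := 0) (Delta0Rel.not hR)).congr fun _ => not_not.symm
  | succ m ih =>
    obtain ⟨Q, hQ, hRQ⟩ := hR
    exact ⟨Q, ih hQ, hRQ⟩

theorem SigmaRel.mono {n : ℕ} {R : Stream' M → Prop} (hR : SigmaRel m R) (hmn : m ≤ n) :
    SigmaRel n R :=
  Nat.le_induction hR (fun _ _ => succ) n hmn

theorem Delta0Rel.sigmaRel {R : Stream' M → Prop} (hR : Delta0Rel R) : SigmaRel m R :=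
  SigmaRel.mono (m := 0) hR m.zero_le

end SigmaRel

section Formulas

open Filter
open scoped Stream'

variable {M : Type} [lang.Structure M] {m : ℕ}

theorem realize_ltFm {α : Type} {n : ℕ} {t u : lang.Term (α ⊕ Fin n)} {v : α → M}
    {xs : Fin n → M} :
    (ltFm t u).Realize v xs ↔ t.realize (Sum.elim v xs) < u.realize (Sum.elim v xs) :=
  BoundedFormula.realize_rel₂ (L := lang) (R := (Rel.lt : lang.Relations 2))

theorem realize_liftAt_snoc {α : Type} {n : ℕ} {t : lang.Term (α ⊕ Fin n)} {v : α → M}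
    {xs : Fin n → M} {x : M} :
    (t.liftAt 1 n).realize (Sum.elim v (Fin.snoc xs x)) = t.realize (Sum.elim v xs) := by
  rw [Term.realize_liftAt]
  congr 1
  ext (a | i)
  · rfl
  · simp only [Function.comp_apply, Sum.map_inr, Sum.elim_inr, i.is_lt, if_true]
    exact Fin.snoc_castSucc (α := fun _ => M) x xs i

theorem realize_bdAll {α : Type} {n : ℕ} {t : lang.Term (α ⊕ Fin n)}
    {φ : lang.BoundedFormula α (n + 1)} {v : α → M} {xs : Fin n → M} :
    ((ltFm (Term.var (Sum.inr (Fin.last n))) (t.liftAt 1 n)).imp φ).all.Realize v xs ↔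
      ∀ x, x < t.realize (Sum.elim v xs) → φ.Realize v (Fin.snoc xs x) := by
  simp only [BoundedFormula.realize_all, BoundedFormula.realize_imp, realize_ltFm,
    realize_liftAt_snoc, Term.realize_var, Sum.elim_inr, Fin.snoc_last]

/-- The choice `σ` of a variable for each place of an environment, after one more variable has been
bound: the new variable goes to the head of the environment. -/
def bindVar {α : Type} {n : ℕ} (σ : Stream' (α ⊕ Fin n)) : Stream' (α ⊕ Fin (n + 1)) :=
  .inr (Fin.last n) :: σ.map (Sum.map id Fin.castSucc)

omit [lang.Structure M] in
theorem map_bindVar {α : Type} {n : ℕ} (σ : Stream' (α ⊕ Fin n)) (v : α → M) (xs : Fin n → M)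
    (x : M) :
    (bindVar σ).map (Sum.elim v (Fin.snoc xs x)) = x :: σ.map (Sum.elim v xs) := by
  rw [bindVar, Stream'.map_cons, Stream'.map_map, Sum.elim_comp_map, Fin.snoc_comp_castSucc,
    Sum.elim_inr, Fin.snoc_last, Function.comp_id]

theorem IsTermFun.eventually_exists_term {f : Stream' M → M} (hf : IsTermFun f) :
    ∀ᶠ s : Finset M in atTop, ∀ {α : Type} {n : ℕ} (σ : Stream' (α ⊕ Fin n)) (ρ : M → α),
      ∃ t : lang.Term (α ⊕ Fin n), ∀ v xs, (∀ c ∈ s, v (ρ c) = c) →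
        t.realize (Sum.elim v xs) = f (σ.map (Sum.elim v xs)) := by
  classical
  obtain ⟨t, ht⟩ := hf
  filter_upwards [eventually_ge_atTop t.varFinsetLeft] with s hs _ _ σ ρ
  refine ⟨(t.restrictVarLeft fun c => ρ c).relabel (Sum.elim .inl σ.get), fun v xs hv => ?_⟩
  rw [Term.realize_relabel, Term.realize_restrictVarLeft id fun c => hv c (hs c.2), ht]
  rfl

/-- The relation `R` on environments is defined by formulas of the class `Γ`, for any choice `σ` of
a variable for each place of the environment and any choice `ρ` of free variables to hold the
parameters, of which only finitely many matter. -/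
def DefinableBy (Γ : ∀ {α : Type} (n : ℕ), lang.BoundedFormula α n → Prop)
    (R : Stream' M → Prop) : Prop :=
  ∀ᶠ s : Finset M in atTop, ∀ {α : Type} {n : ℕ} (σ : Stream' (α ⊕ Fin n)) (ρ : M → α),
    ∃ φ : lang.BoundedFormula α n, Γ n φ ∧ ∀ v xs, (∀ c ∈ s, v (ρ c) = c) →
      (φ.Realize v xs ↔ R (σ.map (Sum.elim v xs)))

theorem DefinableBy.mono {Γ Δ : ∀ {α : Type} (n : ℕ), lang.BoundedFormula α n → Prop}
    {R : Stream' M → Prop} (hR : DefinableBy Γ R)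
    (h : ∀ {α : Type} {n : ℕ} {φ : lang.BoundedFormula α n}, Γ n φ → Δ n φ) : DefinableBy Δ R := by
  filter_upwards [hR] with s hs _ _ σ ρ
  exact (hs σ ρ).imp fun _ => .imp_left h

theorem Delta0Rel.definableBy {R : Stream' M → Prop} (hR : Delta0Rel R) :
    DefinableBy IsDelta0 R := by
  induction hR with
  | falsum => exact .of_forall fun _ _ _ _ _ => ⟨_, .falsum _, fun _ _ _ => Iff.rfl⟩
  | eq hf hg =>
    filter_upwards [hf.eventually_exists_term, hg.eventually_exists_term] with s hf hg _ _ σ ρ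
    obtain ⟨t, ht⟩ := hf σ ρ
    obtain ⟨u, hu⟩ := hg σ ρ
    refine ⟨_, .equal _ t u, fun v xs hv => ?_⟩
    rw [← ht v xs hv, ← hu v xs hv]
    rfl
  | lt hf hg =>
    filter_upwards [hf.eventually_exists_term, hg.eventually_exists_term] with s hf hg _ _ σ ρ
    obtain ⟨t, ht⟩ := hf σ ρ
    obtain ⟨u, hu⟩ := hg σ ρ
    refine ⟨ltFm t u, .rel _ _ _ _, fun v xs hv => ?_⟩
    rw [← ht v xs hv, ← hu v xs hv, realize_ltFm]
  | imp _ _ ihA ihB =>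
    filter_upwards [ihA, ihB] with s hA hB _ _ σ ρ
    obtain ⟨φ, hφ, hφA⟩ := hA σ ρ
    obtain ⟨ψ, hψ, hψB⟩ := hB σ ρ
    refine ⟨_, hφ.imp _ hψ, fun v xs hv => ?_⟩
    rw [BoundedFormula.realize_imp, hφA v xs hv, hψB v xs hv]
  | ball hf _ ih =>
    filter_upwards [hf.eventually_exists_term, ih] with s hf hA _ _ σ ρ
    obtain ⟨t, ht⟩ := hf σ ρ
    obtain ⟨φ, hφ, hφA⟩ := hA (bindVar σ) ρ
    refine ⟨_, hφ.bdAll _ t, fun v xs hv => ?_⟩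
    rw [realize_bdAll, ← ht v xs hv]
    exact forall₂_congr fun x _ => by rw [hφA v _ hv, map_bindVar]; rfl

theorem SigmaRel.definableBy {R : Stream' M → Prop} (hR : SigmaRel m R) :
    DefinableBy (SigmaFm m) R ∧ DefinableBy (PiFm m) fun e => ¬R e := by
  induction m generalizing R with
  | zero =>
    exact ⟨(Delta0Rel.definableBy hR).mono (.delta0 _ _),
      (Delta0Rel.definableBy (.not hR)).mono (.delta0 _ _)⟩
  | succ m ih =>
    obtain ⟨Q, hQ, hRQ⟩ := hR
    obtain ⟨hQ, hQc⟩ := ih hQ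
    constructor
    · filter_upwards [hQc] with s hs _ _ σ ρ
      obtain ⟨φ, hφ, hφQ⟩ := hs (bindVar σ) ρ
      refine ⟨_, .ex m _ (.ofPi m _ hφ), fun v xs hv => ?_⟩
      rw [BoundedFormula.realize_ex, hRQ]
      exact exists_congr fun x => by rw [hφQ v _ hv, map_bindVar]; rfl
    · filter_upwards [hQ] with s hs _ _ σ ρ
      obtain ⟨φ, hφ, hφQ⟩ := hs (bindVar σ) ρ
      refine ⟨_, .all m _ (.ofSigma m _ hφ), fun v xs hv => ?_⟩
      rw [BoundedFormula.realize_all, hRQ, not_exists_not]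
      exact forall_congr' fun x => by rw [hφQ v _ hv, map_bindVar]; rfl

theorem SigmaRel.isSigmaDef {k : ℕ} {P : (Fin k → M) → Prop}
    (hP : SigmaRel m fun e => P fun i => e.get i) : IsSigmaDef m M P := by
  obtain ⟨s, hs⟩ := hP.definableBy.1.exists
  let w : Fin (s.toList.length + 1) → M := (0 :: s.toList).get
  have hw : ∀ c ∈ s, w (Function.invFun w c) = c := fun c hc =>
    Function.invFun_eq (List.get_of_mem (.tail _ (Finset.mem_toList.2 hc)))
  obtain ⟨φ, hφ, hφP⟩ := hs (α := Fin k ⊕ Fin (s.toList.length + 1)) (n := 0)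
    (fun i => .inl (if h : i < k then .inl ⟨i, h⟩ else .inr 0)) fun c => .inr (w.invFun c)
  refine ⟨_, φ, w, hφ, fun v => ?_⟩
  rw [hφP (Sum.elim v w) finZeroElim hw]
  refine iff_of_eq (congrArg P (funext fun i => ?_))
  simp [Stream'.get, Stream'.map]

end Formulas

section Closure

open scoped Stream'

variable {M : Type} [lang.Structure M] {m n : ℕ}

theorem SigmaRel.exists_matrix {A : M → Stream' M → Prop}
    (hA : SigmaRel (m + 1) fun e => A e.head e.tail) :
    ∃ Q : M → M → Stream' M → Prop, SigmaRel m (fun e => Q e.head e.tail.head e.tail.tail) ∧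
      ∀ x e, A x e ↔ ∃ y, ¬Q y x e := by
  obtain ⟨Q, hQ, hAQ⟩ := hA
  exact ⟨fun y x e => Q y (x :: e),
    hQ.comp₁ (isTermFun_get 0) ((isTermFun_get 1).cons (isTermMap_drop 2)), fun x e => hAQ (x :: e)⟩

theorem SigmaRel.induction (hI : ISig n M) (hmn : m ≤ n) {P : M → Prop}
    (hP : SigmaRel m fun e => P e.head) (zero : P 0) (succ : ∀ x, P x → P (x + 1)) (x : M) : P x :=
  hI {x | P x} ((hP.mono hmn).isSigmaDef (P := fun v : Fin 1 → M => P (v 0))) zero succ x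

/-- The Σ_m relations are closed under conjunction, disjunction and bounded quantification. For
`m > 0` the closure under bounded universal quantification rests on Σ_m collection. -/
structure BoundedClosed (M : Type) [lang.Structure M] (m : ℕ) : Prop where
  and {A B : Stream' M → Prop} : SigmaRel m A → SigmaRel m B → SigmaRel m fun e => A e ∧ B e
  or {A B : Stream' M → Prop} : SigmaRel m A → SigmaRel m B → SigmaRel m fun e => A e ∨ B e
  ball {f : Stream' M → M} {A : M → Stream' M → Prop} : IsTermFun f →
    SigmaRel m (fun e => A e.head e.tail) → SigmaRel m fun e => ∀ x, x < f e → A x e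
  bex {f : Stream' M → M} {A : M → Stream' M → Prop} : IsTermFun f →
    SigmaRel m (fun e => A e.head e.tail) → SigmaRel m fun e => ∃ x, x < f e ∧ A x e

theorem boundedClosed_zero : BoundedClosed M 0 where
  and hA hB := SigmaRel.congr (m := 0) (Delta0Rel.imp hA (.not hB)).not fun _ => by
    rw [Classical.not_imp, not_not]
  or hA hB := SigmaRel.congr (m := 0) (Delta0Rel.not hA |>.imp hB) fun _ => or_iff_not_imp_left
  ball hf hA := Delta0Rel.ball hf hA
  bex {_ A} hf hA := SigmaRel.congr (m := 0)
    (Delta0Rel.not (.ball (A := fun x e => ¬A x e) hf (.not hA))) fun _ => by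
      simp only [not_forall, not_not, exists_prop]

theorem BoundedClosed.or_succ (hm : BoundedClosed M m) {A B : Stream' M → Prop}
    (hA : SigmaRel (m + 1) A) (hB : SigmaRel (m + 1) B) :
    SigmaRel (m + 1) fun e => A e ∨ B e := by
  obtain ⟨Q, hQ, hAQ⟩ := hA
  obtain ⟨Q', hQ', hBQ'⟩ := hB
  refine ⟨fun y e => Q y e ∧ Q' y e, hm.and hQ hQ', fun e => ?_⟩
  simp only [hAQ, hBQ', not_and_or, exists_or]

variable [Fact (PAm M)]

theorem BoundedClosed.ex (hm : BoundedClosed M m) {A : M → Stream' M → Prop}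
    (hA : SigmaRel (m + 1) fun e => A e.head e.tail) : SigmaRel (m + 1) fun e => ∃ x, A x e := by
  obtain ⟨Q, hQ, hAQ⟩ := hA.exists_matrix
  refine ⟨fun w e => ∀ x, x < w → ∀ y, y < w → Q y x e,
    hm.ball (isTermFun_get 0) (hm.ball (isTermFun_get 1)
      (hQ.comp₂ (isTermFun_get 0) (isTermFun_get 1) (isTermMap_drop 3))), fun e => ?_⟩
  simp only [hAQ, not_forall, exists_prop]
  constructor
  · rintro ⟨x, y, hxy⟩
    obtain ⟨w, hw⟩ := exists_gt (max x y)
    exact ⟨w, x, (le_max_left x y).trans_lt hw, y, (le_max_right x y).trans_lt hw, hxy⟩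
  · rintro ⟨-, x, -, y, -, hxy⟩
    exact ⟨x, y, hxy⟩

theorem BoundedClosed.and_succ (hm : BoundedClosed M m) {A B : Stream' M → Prop}
    (hA : SigmaRel (m + 1) A) (hB : SigmaRel (m + 1) B) :
    SigmaRel (m + 1) fun e => A e ∧ B e := by
  obtain ⟨Q, hQ, hAQ⟩ := hA
  obtain ⟨Q', hQ', hBQ'⟩ := hB
  have hex : SigmaRel (m + 1) fun e => ∃ y', ∃ y, ¬(Q y e ∨ Q' y' e) :=
    hm.ex <| hm.ex (A := fun y e => ¬(Q y e.tail ∨ Q' e.head e.tail)) <| SigmaRel.compl <|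
      hm.or (hQ.comp₁ (isTermFun_get 0) (isTermMap_drop 2))
        (hQ'.comp₁ (isTermFun_get 1) (isTermMap_drop 2))
  refine hex.congr fun e => ?_
  simp only [hAQ, hBQ', not_or, exists_and_left, exists_and_right]

theorem BoundedClosed.exists_bound (hm : BoundedClosed M m) (hI : ISig n M) (hmn : m + 1 ≤ n)
    {Q : M → M → Stream' M → Prop} (hQ : SigmaRel m fun e => Q e.head e.tail.head e.tail.tail)
    {a : M} {e : Stream' M} (h : ∀ x, x < a → ∃ y, ¬Q y x e) :
    ∃ b, ¬∃ x, x < a ∧ ∀ y, y < b → Q y x e := by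
  have hdef : SigmaRel (m + 1) fun e' : Stream' M =>
      ∃ b, ¬∃ x, x < e'.head ∧ x < a ∧ ∀ y, y < b → Q y x e :=
    ⟨_, hm.bex (isTermFun_get 1) <| hm.and
      (Delta0Rel.lt (isTermFun_get 0) (isTermFun_const a)).sigmaRel <| hm.ball (isTermFun_get 1) <|
      hQ.comp₂ (σ := fun _ => e) (isTermFun_get 0) (isTermFun_get 1) (isTermMap_const e),
    fun _ => Iff.rfl⟩
  suffices hu : ∀ u, ∃ b, ¬∃ x, x < u ∧ x < a ∧ ∀ y, y < b → Q y x e from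
    (hu a).imp fun b hb ⟨x, hx, hxb⟩ => hb ⟨x, hx, hx, hxb⟩
  refine hdef.induction hI hmn ⟨0, fun ⟨x, hx, _⟩ => not_lt_zero hx⟩ fun u ⟨b, hb⟩ => ?_
  obtain ⟨b', hbb', hub'⟩ : ∃ b', b ≤ b' ∧ (u < a → ∃ y, y < b' ∧ ¬Q y u e) := by
    by_cases hu : u < a
    · obtain ⟨y, hy⟩ := h u hu
      obtain ⟨b', hb'⟩ := exists_gt (max b y)
      exact ⟨b', (le_max_left b y).trans hb'.le,
        fun _ => ⟨y, (le_max_right b y).trans_lt hb', hy⟩⟩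
    · exact ⟨b, le_rfl, fun hu' => absurd hu' hu⟩
  refine ⟨b', fun ⟨x, hxu, hxa, hxb⟩ => ?_⟩
  rcases (Order.lt_add_one_iff.1 hxu).lt_or_eq with hxu | rfl
  · exact hb ⟨x, hxu, hxa, fun y hy => hxb y (hy.trans_le hbb')⟩
  · obtain ⟨y, hy, hQy⟩ := hub' hxa
    exact hQy (hxb y hy)

theorem BoundedClosed.ball_succ (hm : BoundedClosed M m) (hI : ISig n M) (hmn : m + 1 ≤ n)
    {f : Stream' M → M} {A : M → Stream' M → Prop} (hf : IsTermFun f)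
    (hA : SigmaRel (m + 1) fun e => A e.head e.tail) :
    SigmaRel (m + 1) fun e => ∀ x, x < f e → A x e := by
  obtain ⟨Q, hQ, hAQ⟩ := hA.exists_matrix
  refine ⟨fun b e => ∃ x, x < f e ∧ ∀ y, y < b → Q y x e,
    hm.bex (hf.comp isTermMap_tail) (hm.ball (isTermFun_get 1)
      (hQ.comp₂ (isTermFun_get 0) (isTermFun_get 1) (isTermMap_drop 3))), fun e => ?_⟩
  simp only [hAQ]
  refine ⟨hm.exists_bound hI hmn hQ, fun ⟨b, hb⟩ x hx => ?_⟩
  by_contra! hxQ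
  exact hb ⟨x, hx, fun y _ => hxQ y⟩

theorem ISig.boundedClosed (hI : ISig n M) (hmn : m ≤ n) : BoundedClosed M m := by
  induction m with
  | zero => exact boundedClosed_zero
  | succ m ih =>
    have hm := ih (Nat.le_of_succ_le hmn)
    exact
      { and := hm.and_succ
        or := hm.or_succ
        ball := hm.ball_succ hI hmn
        bex := fun hf hA => hm.ex <| hm.and_succ
          (Delta0Rel.lt (isTermFun_get 0) (hf.comp isTermMap_tail)).sigmaRel hA }

end Closure

section Definability

open scoped Stream'

variable {M : Type} [lang.Structure M] {m n : ℕ}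

theorem isTermFun_realize_sumElim {α : Type} {k : ℕ} {v : Stream' M → α → M}
    (hv : ∀ a, IsTermFun fun e => v e a) {xs : Stream' M → Fin k → M}
    (hxs : ∀ i, IsTermFun fun e => xs e i) (t : lang.Term (α ⊕ Fin k)) :
    IsTermFun fun e => t.realize (Sum.elim (v e) (xs e)) :=
  isTermFun_realize t (Sum.rec hv hxs)

theorem isTermFun_snoc {k : ℕ} {xs : Stream' M → Fin k → M} (hxs : ∀ i, IsTermFun fun e => xs e i)
    (i : Fin (k + 1)) :
    IsTermFun fun e => Fin.snoc (α := fun _ => M) (xs e.tail) e.head i := by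
  induction i using Fin.lastCases with
  | last => simpa only [Fin.snoc_last] using isTermFun_get 0
  | cast i => simpa only [Fin.snoc_castSucc] using (hxs i).comp isTermMap_tail

theorem IsDelta0.delta0Rel {α : Type} {k : ℕ} {φ : lang.BoundedFormula α k} (hφ : IsDelta0 k φ)
    {v : Stream' M → α → M} (hv : ∀ a, IsTermFun fun e => v e a)
    {xs : Stream' M → Fin k → M} (hxs : ∀ i, IsTermFun fun e => xs e i) :
    Delta0Rel fun e => φ.Realize (v e) (xs e) := by
  induction hφ generalizing v with
  | falsum => exact .falsum
  | equal _ t u =>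
    exact .eq (isTermFun_realize_sumElim hv hxs t) (isTermFun_realize_sumElim hv hxs u)
  | rel _ _ R ts =>
    cases R
    rw [← FinVec.etaExpand_eq ts]
    exact SigmaRel.congr (m := 0) (Delta0Rel.lt (isTermFun_realize_sumElim hv hxs (ts 0))
      (isTermFun_realize_sumElim hv hxs (ts 1))) fun _ => realize_ltFm
  | imp _ _ _ ihφ ihψ => exact .imp (ihφ hv hxs) (ihψ hv hxs)
  | bdAll _ t _ ih =>
    simp only [realize_bdAll]
    exact .ball (isTermFun_realize_sumElim hv hxs t)
      (ih (fun a => (hv a).comp isTermMap_tail) (isTermFun_snoc hxs))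

variable [Fact (PAm M)]

mutual

theorem SigmaFm.sigmaRel {α : Type} : ∀ {m k : ℕ} {φ : lang.BoundedFormula α k},
    SigmaFm m k φ → (∀ i < m, BoundedClosed M i) →
    ∀ {v : Stream' M → α → M}, (∀ a, IsTermFun fun e => v e a) →
    ∀ {xs : Stream' M → Fin k → M}, (∀ i, IsTermFun fun e => xs e i) →
    SigmaRel m fun e => φ.Realize (v e) (xs e)
  | _, _, _, .delta0 _ _ hφ, _, _, hv, _, hxs => (hφ.delta0Rel hv hxs).sigmaRel
  | _, _, _, .ofPi _ _ hφ, hm, _, hv, _, hxs =>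
    (hφ.sigmaRel_not (fun i hi => hm i (hi.trans (Nat.lt_succ_self _))) hv hxs).compl.congr
      fun _ => not_not.symm
  | _, _, _, .ex m _ hφ, hm, _, hv, _, hxs =>
    ((hm m (Nat.lt_succ_self m)).ex <| hφ.sigmaRel hm
      (fun a => (hv a).comp isTermMap_tail) (isTermFun_snoc hxs)).congr
      fun _ => BoundedFormula.realize_ex

theorem PiFm.sigmaRel_not {α : Type} : ∀ {m k : ℕ} {φ : lang.BoundedFormula α k},
    PiFm m k φ → (∀ i < m, BoundedClosed M i) →
    ∀ {v : Stream' M → α → M}, (∀ a, IsTermFun fun e => v e a) →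
    ∀ {xs : Stream' M → Fin k → M}, (∀ i, IsTermFun fun e => xs e i) →
    SigmaRel m fun e => ¬φ.Realize (v e) (xs e)
  | _, _, _, .delta0 _ _ hφ, _, _, hv, _, hxs => (hφ.delta0Rel hv hxs).not.sigmaRel
  | _, _, _, .ofSigma _ _ hφ, hm, _, hv, _, hxs =>
    (hφ.sigmaRel (fun i hi => hm i (hi.trans (Nat.lt_succ_self _))) hv hxs).compl
  | _, _, _, .all m _ hφ, hm, _, hv, _, hxs =>
    ((hm m (Nat.lt_succ_self m)).ex <| hφ.sigmaRel_not hm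
      (fun a => (hv a).comp isTermMap_tail) (isTermFun_snoc hxs)).congr
      fun _ => BoundedFormula.realize_all.not.trans not_forall

end

theorem ISig.isSigmaDef_iff (hI : ISig n M) (hmn : m ≤ n + 1) {k : ℕ} {P : (Fin k → M) → Prop} :
    IsSigmaDef m M P ↔ SigmaRel m fun e => P fun i => e.get i := by
  refine ⟨fun ⟨p, φ, w, hφ, hP⟩ => ?_, SigmaRel.isSigmaDef⟩
  refine SigmaRel.congr ?_ fun e => hP fun i => e.get i
  exact hφ.sigmaRel (fun i hi => hI.boundedClosed (Nat.le_of_lt_succ (hi.trans_le hmn)))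
    (Sum.rec (fun i => isTermFun_get i) (fun j => isTermFun_const (w j))) (fun i => i.elim0)

end Definability

section Uniformization

open scoped Stream'

variable {M : Type} [lang.Structure M] {m n : ℕ} {A : M → Stream' M → Prop} {Q : M → M → M → Prop}

theorem SigmaRel.exists_matrix₂ {F : M → M → Prop}
    (hF : SigmaRel (m + 1) fun e => F (e.get 0) (e.get 1)) :
    ∃ Q : M → M → M → Prop, SigmaRel m (fun e => Q (e.get 0) (e.get 1) (e.get 2)) ∧
      ∀ x v, F x v ↔ ∃ z, ¬Q z x v := by
  obtain ⟨Q, hQ, hFQ⟩ := hF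
  exact ⟨fun z x v => Q z (x :: Stream'.const v), hQ.comp₁ (isTermFun_get 0)
    ((isTermFun_get 1).cons fun _ => isTermFun_get 2), fun x v => hFQ (x :: Stream'.const v)⟩

/-- The values selected from a binary relation `F x v ↔ ∃ z, ¬Q z x v`: with `w` the least bound
below which `F x` has a value together with a witness for it, `v` is the least value with a witness
below `w`. -/
def leastSelection (Q : M → M → M → Prop) (x v : M) : Prop :=
  ∃ w, IsLeast {u | ¬∀ v, v < u → ∀ z, z < u → Q z x v} w ∧
    IsLeast {u | ¬∀ z, z < w → Q z x u} v

theorem exists_not_of_leastSelection {x v : M} (h : leastSelection Q x v) : ∃ z, ¬Q z x v := by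
  obtain ⟨w, -, hv, -⟩ := h
  exact (not_forall₂.1 hv).imp fun _ => fun ⟨_, hz⟩ => hz

theorem SigmaRel.ball_witness (hm : BoundedClosed M m)
    (hQ : SigmaRel m fun e => Q (e.get 0) (e.get 1) (e.get 2)) :
    SigmaRel m fun e => ∀ z, z < e.get 1 → Q z (e.get 2) (e.get 0) :=
  hm.ball (isTermFun_get 1) <| hQ.comp <|
    (isTermFun_get 0).cons ((isTermFun_get 3).cons ((isTermFun_get 1).cons (isTermMap_drop 4)))

theorem SigmaRel.ball_ball_witness (hm : BoundedClosed M m)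
    (hQ : SigmaRel m fun e => Q (e.get 0) (e.get 1) (e.get 2)) :
    SigmaRel m fun e => ∀ v, v < e.get 0 → ∀ z, z < e.get 0 → Q z (e.get 1) v :=
  hm.ball (isTermFun_get 0) (hQ.ball_witness hm)

variable [Fact (PAm M)]

theorem isPartialFun_leastSelection : IsPartialFun (leastSelection Q) := by
  rintro x v v' ⟨w, hw, hv⟩ ⟨w', hw', hv'⟩
  obtain rfl := hw.unique hw'
  exact hv.unique hv'

theorem ISig.exists_isLeast (hI : ISig n M) (hA : SigmaRel n fun e => A e.head e.tail)
    {e : Stream' M} (h : ∃ w, ¬A w e) : ∃ w, IsLeast {u | ¬A u e} w := by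
  by_contra! hmin
  have hdef : SigmaRel n fun e' : Stream' M => ∀ u, u < e'.head → A u e :=
    (hI.boundedClosed le_rfl).ball (isTermFun_get 0)
      (hA.comp₁ (σ := fun _ => e) (isTermFun_get 0) (isTermMap_const e))
  suffices hlt : ∀ x u, u < x → A u e from h.elim fun w hw => hw (hlt (w + 1) w (lt_add_one w))
  refine hdef.induction hI le_rfl (fun _ hu => absurd hu not_lt_zero) fun x hx u hu => ?_
  rcases (Order.lt_add_one_iff.1 hu).lt_or_eq with hu | rfl
  · exact hx u hu
  · by_contra hu
    exact hmin u ⟨hu, fun v hv => not_lt.1 fun hvu => hv (hx v hvu)⟩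

theorem BoundedClosed.sigmaRel_isLeast (hm : BoundedClosed M m)
    (hA : SigmaRel m fun e => A e.head e.tail) {f : Stream' M → M} {σ : Stream' M → Stream' M}
    (hf : IsTermFun f) (hσ : IsTermMap σ) :
    SigmaRel (m + 1) fun e => IsLeast {w | ¬A w (σ e)} (f e) := by
  have hball : SigmaRel m fun e => ∀ w, w < f e → A w (σ e) :=
    hm.ball hf (hA.comp₁ (isTermFun_get 0) (hσ.comp isTermMap_tail))
  refine (hm.and_succ (hA.comp₁ hf hσ).compl hball.succ).congr fun e => and_congr_right fun _ => ?_
  exact forall_congr' fun w => by rw [Set.mem_ofPred_eq, ← not_lt, not_imp_not]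

theorem SigmaRel.leastSelection (hm : BoundedClosed M m)
    (hQ : SigmaRel m fun e => Q (e.get 0) (e.get 1) (e.get 2)) :
    SigmaRel (m + 1) fun e => leastSelection Q (e.get 0) (e.get 1) :=
  hm.ex <| hm.and_succ
    (hm.sigmaRel_isLeast (A := fun w e => ∀ v, v < w → ∀ z, z < w → Q z e.head v)
      (hQ.ball_ball_witness hm) (isTermFun_get 0) (isTermMap_drop 1))
    (hm.sigmaRel_isLeast (A := fun v e => ∀ z, z < e.get 0 → Q z (e.get 1) v)
      (hQ.ball_witness hm) (isTermFun_get 2) (isTermMap_drop 0))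

theorem ISig.exists_leastSelection (hI : ISig n M)
    (hQ : SigmaRel n fun e => Q (e.get 0) (e.get 1) (e.get 2)) {x v z : M} (hz : ¬Q z x v) :
    ∃ v, ArithFC.leastSelection Q x v := by
  have hn := hI.boundedClosed le_rfl
  obtain ⟨u, hu⟩ := exists_gt (max v z)
  obtain ⟨w, hw⟩ := hI.exists_isLeast (e := Stream'.const x)
    (A := fun w e => ∀ v, v < w → ∀ z, z < w → Q z e.head v) (hQ.ball_ball_witness hn)
    ⟨u, fun h => hz (h v ((le_max_left v z).trans_lt hu) z ((le_max_right v z).trans_lt hu))⟩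
  obtain ⟨v', hv'⟩ := not_forall.1 hw.1
  obtain ⟨v, hv⟩ := hI.exists_isLeast (e := w :: Stream'.const x)
    (A := fun v e => ∀ z, z < e.get 0 → Q z (e.get 1) v) (hQ.ball_witness hn)
    ⟨v', (Classical.not_imp.1 hv').2⟩
  exact ⟨v, w, hw, hv⟩

theorem ISig.exists_uniformization (hI : ISig n M) {F : M → M → Prop}
    (hF : SigmaRel (n + 1) fun e => F (e.get 0) (e.get 1)) :
    ∃ G : M → M → Prop, SigmaRel (n + 1) (fun e => G (e.get 0) (e.get 1)) ∧ IsPartialFun G ∧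
      (∀ x v, G x v → F x v) ∧ ∀ x v, F x v → ∃ v, G x v := by
  obtain ⟨Q, hQ, hFQ⟩ := hF.exists_matrix₂
  simp only [hFQ]
  exact ⟨ArithFC.leastSelection Q, hQ.leastSelection (hI.boundedClosed le_rfl),
    isPartialFun_leastSelection, fun _ _ => exists_not_of_leastSelection,
    fun _ _ ⟨_, hz⟩ => hI.exists_leastSelection hQ hz⟩

end Uniformization

section Injections

open scoped Stream'

variable {M : Type} [lang.Structure M] {a a' b c c' i : M} {F G : M → M → Prop}

/-- `F` is a multivalued injection from `[0, y)` into `[0, x)`, in the sense of `CARD`: every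
`u < y` has a value below `x`, and distinct elements of `[0, y)` have no value in common. -/
structure IsMultiInj (F : M → M → Prop) (y x : M) : Prop where
  total : ∀ u, u < y → ∃ v, v < x ∧ F u v
  inj : ∀ u u' v, u < y → u' < y → F u v → F u' v → u = u'

theorem IsMultiInj.comp (hF : IsMultiInj F c b) (hG : IsMultiInj G b a) :
    IsMultiInj (fun u v => ∃ w, w < b ∧ F u w ∧ G w v) c a where
  total u hu := by
    obtain ⟨w, hw, hF⟩ := hF.total u hu
    obtain ⟨v, hv, hG⟩ := hG.total w hw
    exact ⟨v, hv, w, hw, hF, hG⟩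
  inj u u' v hu hu' := by
    rintro ⟨w, hw, hFw, hGw⟩ ⟨w', hw', hFw', hGw'⟩
    obtain rfl := hG.inj w w' v hw hw' hGw hGw'
    exact hF.inj u u' w hu hu' hFw hFw'

variable [Fact (PAm M)]

theorem IsMultiInj.block (hF : IsMultiInj F (c * c') b) (hi : i < c') :
    IsMultiInj (fun j v => F (c * i + j) v) c b where
  total _ hj := hF.total _ (mul_add_lt_mul hi hj)
  inj _ _ v hj hj' hFj hFj' :=
    add_left_cancel (hF.inj _ _ v (mul_add_lt_mul hi hj) (mul_add_lt_mul hi hj') hFj hFj')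

theorem IsMultiInj.blocks (hF : IsMultiInj F (c * c') b)
    (h : ∀ i, i < c' → ∃ j, j < c ∧ ∃ v, v < a' ∧ F (c * i + j) (a + v)) :
    IsMultiInj (fun i v => ∃ j, j < c ∧ F (c * i + j) (a + v)) c' a' where
  total i hi := by
    obtain ⟨j, hj, v, hv, hF⟩ := h i hi
    exact ⟨v, hv, j, hj, hF⟩
  inj i i' v hi hi' := by
    rintro ⟨j, hj, hFj⟩ ⟨j', hj', hFj'⟩
    exact eq_of_mul_add_eq_mul_add hj hj' <|
      hF.inj _ _ _ (mul_add_lt_mul hi hj) (mul_add_lt_mul hi' hj') hFj hFj'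

variable {n : ℕ}

theorem IsMultiInj.exSigmaInj (hF : IsMultiInj F b a) (hI : ISig n M)
    (hdef : SigmaRel (n + 1) fun e => F (e.get 0) (e.get 1)) : ExSigmaInj M (n + 1) b a := by
  have hdef' : SigmaRel (n + 1) fun e => e.get 1 < a ∧ F (e.get 0) (e.get 1) :=
    (hI.boundedClosed le_rfl).and_succ
      (Delta0Rel.lt (isTermFun_get 1) (isTermFun_const a)).sigmaRel hdef
  obtain ⟨G, hG, hfun, hGF, hdom⟩ :=
    hI.exists_uniformization (F := fun u v => v < a ∧ F u v) hdef'
  refine ⟨G, (hI.isSigmaDef_iff le_rfl).2 hG, fun u hu => ?_, fun u v v' _ => hfun u v v',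
    fun u u' v hu hu' hv hv' => hF.inj u u' v hu hu' (hGF u v hv).2 (hGF u' v hv').2⟩
  obtain ⟨v, hv, hFv⟩ := hF.total u hu
  exact (hdom u v ⟨hv, hFv⟩).imp fun v hv => ⟨(hGF u v hv).1, hv⟩

theorem ISig.exSigmaInj_iff (hI : ISig n M) :
    ExSigmaInj M (n + 1) b a ↔
      ∃ F, SigmaRel (n + 1) (fun e => F (e.get 0) (e.get 1)) ∧ IsMultiInj F b a := by
  refine ⟨fun ⟨F, hF, htotal, _, hinj⟩ => ?_, fun ⟨F, hF, hinj⟩ => hinj.exSigmaInj hI hF⟩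
  exact ⟨F, (hI.isSigmaDef_iff le_rfl).1 hF, htotal, hinj⟩

theorem ExSigmaInj.trans (hI : ISig n M) (hcb : ExSigmaInj M (n + 1) c b)
    (hba : ExSigmaInj M (n + 1) b a) : ExSigmaInj M (n + 1) c a := by
  obtain ⟨F, hF, hcb⟩ := hI.exSigmaInj_iff.1 hcb
  obtain ⟨G, hG, hba⟩ := hI.exSigmaInj_iff.1 hba
  have hn := hI.boundedClosed le_rfl
  refine (hcb.comp hba).exSigmaInj hI (hn.ex <| hn.and_succ
    (Delta0Rel.lt (isTermFun_get 0) (isTermFun_const b)).sigmaRel (hn.and_succ ?_ ?_))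
  · exact hF.comp ((isTermFun_get 1).cons ((isTermFun_get 0).cons (isTermMap_drop 0)))
  · exact hG.comp ((isTermFun_get 0).cons ((isTermFun_get 2).cons (isTermMap_drop 0)))

theorem IsMultiInj.exists_le_value (hF : IsMultiInj F c (a + a')) (hI : ISig n M)
    (hdef : SigmaRel (n + 1) fun e => F (e.get 0) (e.get 1)) (hca : ¬ExSigmaInj M (n + 1) c a) :
    ∃ j, j < c ∧ ∃ v, v < a' ∧ F j (a + v) := by
  by_contra! h
  refine hca (IsMultiInj.exSigmaInj ⟨fun j hj => ?_, hF.inj⟩ hI hdef)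
  obtain ⟨v, hv, hFv⟩ := hF.total j hj
  refine ⟨v, lt_of_not_ge fun hav => ?_, hFv⟩
  obtain ⟨v, rfl⟩ := exists_add_of_le hav
  exact h j hj v (lt_of_add_lt_add_left hv) hFv

theorem not_exSigmaInj_mul_add (hI : ISig n M) (hca : ¬ExSigmaInj M (n + 1) c a)
    (hca' : ¬ExSigmaInj M (n + 1) c' a') : ¬ExSigmaInj M (n + 1) (c * c') (a + a') := by
  intro h
  obtain ⟨F, hF, hinj⟩ := hI.exSigmaInj_iff.1 h
  have hn := hI.boundedClosed le_rfl
  have hblocks : ∀ i, i < c' → ∃ j, j < c ∧ ∃ v, v < a' ∧ F (c * i + j) (a + v) :=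
    fun i hi => (hinj.block hi).exists_le_value hI (hF.comp
      (((isTermFun_const (c * i)).add (isTermFun_get 0)).cons (isTermMap_drop 1))) hca
  have hdef : SigmaRel (n + 1) fun e =>
      ∃ j, j < c ∧ F (c * e.get 0 + j) (a + e.get 1) :=
    hn.ex <| hn.and_succ (Delta0Rel.lt (isTermFun_get 0) (isTermFun_const c)).sigmaRel <|
      hF.comp ((((isTermFun_const c).mul (isTermFun_get 1)).add (isTermFun_get 0)).cons
        (((isTermFun_const a).add (isTermFun_get 2)).cons (isTermMap_drop 0)))
  exact hca' ((hinj.blocks hblocks).exSigmaInj hI hdef)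

end Injections

section Cut

variable {n : ℕ} {M : Type} [lang.Structure M] {a a' b : M}

/-- The set `I` of the theorem: those `a` such that for some `b` there is no Σ_m-definable injection
from `[0, b)` into `[0, a)`. -/
def gphpCut (m : ℕ) (M : Type) [lang.Structure M] : Set M := {a | ∃ b, ¬ExSigmaInj M m b a}

theorem mem_gphpCut_of_le {m : ℕ} [Fact (PAm M)] (ha : a ∈ gphpCut m M) (h : a' ≤ a) :
    a' ∈ gphpCut m M := by
  obtain ⟨b, hb⟩ := ha
  refine ⟨b, fun ⟨F, hF, htotal, hfun, hinj⟩ => hb ⟨F, hF, fun u hu => ?_, hfun, hinj⟩⟩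
  exact (htotal u hu).imp fun v => .imp_left h.trans_lt'

theorem one_mem_gphpCut {m : ℕ} [Fact (PAm M)] : (1 : M) ∈ gphpCut m M := by
  refine ⟨1 + 1, fun ⟨F, _, htotal, _, hinj⟩ => ?_⟩
  obtain ⟨v, hv, hFv⟩ := htotal 0 (add_pos one_pos one_pos)
  obtain ⟨v', hv', hFv'⟩ := htotal 1 (lt_add_one 1)
  obtain rfl := Order.lt_one_iff.1 hv
  obtain rfl := Order.lt_one_iff.1 hv'
  exact zero_ne_one (hinj 0 1 0 (add_pos one_pos one_pos) (lt_add_one 1) hFv hFv')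

theorem exists_notMem_gphpCut_iff {m : ℕ} : (∃ a, a ∉ gphpCut m M) ↔ ¬GPHP M m := not_forall.symm

variable [Fact (PAm M)]

theorem add_mem_gphpCut (hI : ISig n M) (ha : a ∈ gphpCut (n + 1) M)
    (ha' : a' ∈ gphpCut (n + 1) M) : a + a' ∈ gphpCut (n + 1) M := by
  obtain ⟨c, hc⟩ := ha
  obtain ⟨c', hc'⟩ := ha'
  exact ⟨c * c', not_exSigmaInj_mul_add hI hc hc'⟩

theorem not_exSigmaInj_of_notMem_gphpCut (hI : ISig n M) (ha : a ∈ gphpCut (n + 1) M)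
    (hb : b ∉ gphpCut (n + 1) M) : ¬ExSigmaInj M (n + 1) b a := by
  obtain ⟨c, hc⟩ := ha
  exact fun hba => hc (.trans hI (by_contra fun hcb => hb ⟨c, hcb⟩) hba)

end Cut

theorem statement_10_general (n : ℕ) (M : Type) [lang.Structure M] (hPA : PAm M) (hI : ISig n M)
    (hG : ¬GPHP M (n + 1)) :
    let I : Set M := {a | ∃ b : M, ¬ExSigmaInj M (n + 1) b a}
    (∃ a, a ∈ I) ∧
      (∀ a a' : M, a ∈ I → a' < a → a' ∈ I) ∧
      (∀ a ∈ I, a + 1 ∈ I) ∧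
      (∃ a : M, a ∉ I) ∧
      (∀ a a' : M, a ∈ I → a' ∈ I → a + a' ∈ I) ∧
      (∀ a ∈ I, ∀ b : M, (∀ i ∈ I, i < b) → ¬ExSigmaInj M (n + 1) b a) :=
  haveI : Fact (PAm M) := ⟨hPA⟩
  ⟨⟨1, one_mem_gphpCut⟩, fun _ _ ha h => mem_gphpCut_of_le ha h.le,
    fun _ ha => add_mem_gphpCut hI ha one_mem_gphpCut, exists_notMem_gphpCut_iff.2 hG,
    fun _ _ => add_mem_gphpCut hI,
    fun _ ha b hb => not_exSigmaInj_of_notMem_gphpCut hI ha fun hbI => (hb b hbI).false⟩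

/-- In a model of PA⁻ + IΣn (`n ≥ 1`) where GPHP(Σ_{n+1}) fails, the
set `I = {a : ∃ b, no Σ_{n+1}-definable injection of [0,b) into [0,a)}` is a proper
cut closed under addition, and if `a ∈ I < b` then there is no Σ_{n+1}-definable
injection from `[0,b)` into `[0,a)`. -/
theorem statement_10 (n : ℕ) (hn : 1 ≤ n) (M : Type) [lang.Structure M]
    (hPA : PAm M) (hI : ISig n M) (hG : ¬GPHP M (n + 1)) :
    let I : Set M := {a | ∃ b : M, ¬ExSigmaInj M (n + 1) b a}
    (∃ a, a ∈ I) ∧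
      (∀ a a' : M, a ∈ I → a' < a → a' ∈ I) ∧
      (∀ a ∈ I, a + 1 ∈ I) ∧
      (∃ a : M, a ∉ I) ∧
      (∀ a a' : M, a ∈ I → a' ∈ I → a + a' ∈ I) ∧
      (∀ a ∈ I, ∀ b : M, (∀ i ∈ I, i < b) → ¬ExSigmaInj M (n + 1) b a) :=
  statement_10_general n M hPA hI hG

end ArithFC
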